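/- Let d ≥ 2, 0 ≤ α ≤ 1, and c₀ > 0. There exist constants C > 1 and 0 < c < 1, depending only on d and c₀, such that for every odd prime power q the following holds: if E, F ⊆ F_q^d, the number N(E) of distinct punctured lines through the origin meeting E \ {0} satisfies N(E) ≥ c₀ q^{−α}|E|, and |E||F| ≥ C q^{d+α}, then there exists a subset E₀ ⊆ E with |E₀| ≥ c q^{−α}|E| such that |Π(E₀,F)| ≥ c q. -/

import Mathlib

/-!
Pick one nonzero point of `E` on each punctured line met by `E`; this gives `E₀ ⊆ E` with
`|E₀| = N(E) ≥ c₀ q^{-α}|E|`, hence `|E₀||F| ≥ c₀ C q^d ≥ q^d`.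

For `x ∈ K^d` let `n(x)` be the number of pairs `(y₁, y₂) ∈ F × F` with `x·y₁ = x·y₂`. Three facts
suffice, and no Fourier analysis is needed:

* `q n(x) ≥ |F|²`, by Cauchy–Schwarz (`card_sq_le_collisions`);
* `∑_x q n(x) ≤ |F|² q^d + |F| q^d (q - 1)`, since a pair `y₁ ≠ y₂` collides for at most `q^{d-1}`
  vectors `x` (`sum_collisions_le`);
* `n(s x) = n(x)` for `s ≠ 0`.

As the dilates `s x` (`s ≠ 0`, `x ∈ E₀`) are pairwise distinct, the nonnegative excess
`q n(x) - |F|²` summed over `E₀` is at most `1 / (q - 1)` times its sum over the whole space. This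
gives `∑_{x ∈ E₀} q n(x) ≤ |E₀||F|² + |F| q^d` (`sum_collisions_transversal_le`). Two further uses of
Cauchy–Schwarz give `(|E₀||F|)² ≤ |Π(E₀,F)| |E₀| ∑_{x ∈ E₀} n(x)` (`sq_le_card_dotSet_mul`), and
together these force `q ≤ 2 |Π(E₀,F)|`.
-/

open Finset

noncomputable section

/-- dot product on `Fin d → K` -/
def fqDot {K : Type} [Field K] {d : ℕ} (x y : Fin d → K) : K := ∑ i, x i * y i

/-- dot product set Π(E,F) -/
def dotSet {K : Type} [Field K] [DecidableEq K] {d : ℕ}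
    (E F : Finset (Fin d → K)) : Finset K :=
  (E ×ˢ F).image fun p => fqDot p.1 p.2

/-- punctured line through the origin and x -/
def lineThrough {K : Type} [Field K] [Fintype K] [DecidableEq K] {d : ℕ}
    (x : Fin d → K) : Finset (Fin d → K) :=
  univ.filter fun y => ∃ s : K, s ≠ 0 ∧ y = s • x

/-- Fourier transform of the indicator of F -/
def ftransform {K : Type} [Field K] [Fintype K] {d : ℕ}
    (ψ : AddChar K ℂ) (F : Finset (Fin d → K)) (m : Fin d → K) : ℂ :=
  ((Fintype.card K : ℂ) ^ d)⁻¹ * ∑ x ∈ F, ψ (-(fqDot x m))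

/-- the quantity 𝔅(E,F) -/
def Bquant {K : Type} [Field K] [Fintype K] [DecidableEq K] {d : ℕ}
    (ψ : AddChar K ℂ) (E F : Finset (Fin d → K)) : ℝ :=
  ∑ x ∈ univ.filter (fun x : Fin d → K => x ≠ 0),
    ((E ∩ lineThrough x).card : ℝ) * ‖ftransform ψ F x‖ ^ 2
/-- N(E): the number of distinct punctured lines through the origin meeting E \ {0} -/
def numLines {K : Type} [Field K] [Fintype K] [DecidableEq K] {d : ℕ}
    (E : Finset (Fin d → K)) : ℕ :=
  ((E.filter fun x => x ≠ 0).image fun x => lineThrough x).card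

/-- The number of pairs `(y₁, y₂) ∈ F × F` with `x·y₁ = x·y₂`. -/
def collisions {K : Type} [Field K] [DecidableEq K] {d : ℕ}
    (F : Finset (Fin d → K)) (x : Fin d → K) : ℕ :=
  ((F ×ˢ F).filter fun p => fqDot x p.1 = fqDot x p.2).card

section

variable {K : Type} [Field K] {d : ℕ}

lemma fqDot_smul_left (s : K) (x y : Fin d → K) : fqDot (s • x) y = s * fqDot x y := by
  simp [fqDot, mul_sum, mul_assoc]

lemma fqDot_add_left (x x' y : Fin d → K) : fqDot (x + x') y = fqDot x y + fqDot x' y := by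
  simp [fqDot, add_mul, sum_add_distrib]

lemma fqDot_sub_right (x y y' : Fin d → K) : fqDot x (y - y') = fqDot x y - fqDot x y' := by
  simp [fqDot, mul_sub, sum_sub_distrib]

lemma exists_fqDot_eq_one {z : Fin d → K} (hz : z ≠ 0) : ∃ e, fqDot e z = 1 := by
  classical
  obtain ⟨i, hi⟩ := Function.ne_iff.mp hz
  refine ⟨Pi.single i (z i)⁻¹, ?_⟩
  have hi' : z i ≠ 0 := by simpa using hi
  simp [fqDot, Pi.single_apply, hi']

variable [DecidableEq K]

lemma collisions_smul {s : K} (hs : s ≠ 0) (F : Finset (Fin d → K)) (x : Fin d → K) :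
    collisions F (s • x) = collisions F x := by
  simp [collisions, fqDot_smul_left, hs]

variable [Fintype K]

/-- A hyperplane has at most `q^{d-1}` points: with `e·z = 1`, the map `(t, x) ↦ x + t e` is
injective on `K × z^⊥`. -/
lemma card_mul_card_orthogonal_le {z : Fin d → K} (hz : z ≠ 0) :
    Fintype.card K * (univ.filter fun x : Fin d → K => fqDot x z = 0).card
      ≤ Fintype.card K ^ d := by
  obtain ⟨e, he⟩ := exists_fqDot_eq_one hz
  have hinj : Set.InjOn (fun p : K × (Fin d → K) => p.2 + p.1 • e)
      ((univ : Finset K) ×ˢ univ.filter fun x : Fin d → K => fqDot x z = 0 :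
        Finset (K × (Fin d → K))) := by
    rintro ⟨t, x⟩ hx ⟨t', x'⟩ hx' h
    simp only [coe_product, Set.mem_prod, mem_coe, mem_filter, mem_univ, true_and] at hx hx'
    have h1 : t = t' := by
      simpa [fqDot_add_left, fqDot_smul_left, hx, hx', he] using congrArg (fun w => fqDot w z) h
    subst h1
    simpa using h
  have := card_le_card_of_injOn (t := (univ : Finset (Fin d → K))) _ (fun _ _ => mem_univ _) hinj
  simpa using this

/-- `n(x)` is the second moment of the distribution of `x·y`, `y ∈ F`. -/
lemma collisions_eq_sum_sq (F : Finset (Fin d → K)) (x : Fin d → K) :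
    (collisions F x : ℝ) = ∑ t : K, ((F.filter fun y => fqDot x y = t).card : ℝ) ^ 2 := by
  rw [collisions, card_eq_sum_card_fiberwise (f := fun p => fqDot x p.1) (t := (univ : Finset K))
    (fun _ _ => mem_coe.2 (mem_univ _))]
  push_cast
  refine sum_congr rfl fun t _ => ?_
  rw [sq, ← Nat.cast_mul, ← card_product]
  congr 2
  ext ⟨y, y'⟩
  simp only [mem_filter, mem_product]
  constructor
  · rintro ⟨⟨⟨h1, h2⟩, h3⟩, h4⟩
    exact ⟨⟨h1, h4⟩, h2, h3 ▸ h4⟩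
  · rintro ⟨⟨h1, h2⟩, h3, h4⟩
    exact ⟨⟨⟨h1, h3⟩, h2.trans h4.symm⟩, h2⟩

lemma sum_card_fiber (F : Finset (Fin d → K)) (x : Fin d → K) :
    ∑ t : K, ((F.filter fun y => fqDot x y = t).card : ℝ) = F.card := by
  rw [card_eq_sum_card_fiberwise (f := fun y => fqDot x y) (s := F) (t := (univ : Finset K))
    (fun _ _ => mem_coe.2 (mem_univ _))]
  push_cast
  rfl

lemma card_sq_le_collisions (F : Finset (Fin d → K)) (x : Fin d → K) :
    (F.card : ℝ) ^ 2 ≤ Fintype.card K * collisions F x := by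
  rw [collisions_eq_sum_sq, ← sum_card_fiber F x]
  exact sq_sum_le_card_mul_sum_sq

lemma sum_collisions_eq (F : Finset (Fin d → K)) :
    ∑ x : Fin d → K, collisions F x
      = ∑ p ∈ F ×ˢ F, (univ.filter fun x : Fin d → K => fqDot x (p.1 - p.2) = 0).card := by
  simp only [collisions, card_filter, fqDot_sub_right, sub_eq_zero]
  exact sum_comm

lemma sum_collisions_le (F : Finset (Fin d → K)) :
    ∑ x : Fin d → K, ((Fintype.card K : ℝ) * collisions F x)
      ≤ (F.card : ℝ) ^ 2 * (Fintype.card K : ℝ) ^ d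
        + F.card * (Fintype.card K : ℝ) ^ d * (Fintype.card K - 1) := by
  set q : ℝ := (Fintype.card K : ℝ) with hq
  have hpt : ∀ p ∈ F ×ˢ F,
      q * ((univ.filter fun x : Fin d → K => fqDot x (p.1 - p.2) = 0).card : ℝ)
        ≤ q ^ d + if p.1 = p.2 then q ^ d * (q - 1) else 0 := by
    rintro ⟨y, y'⟩ -
    by_cases h : y = y'
    · subst h
      simp only [sub_self, if_true]
      have : ∀ x : Fin d → K, fqDot x 0 = 0 := fun x => by simp [fqDot]
      simp only [this, filter_true, card_univ, Fintype.card_fun, Fintype.card_fin]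
      push_cast
      rw [← hq]
      exact le_of_eq (by ring)
    · simp only [h, if_false, add_zero]
      rw [hq]
      exact_mod_cast card_mul_card_orthogonal_le (sub_ne_zero.2 h)
  have hdiag : ∑ p ∈ F ×ˢ F, (if p.1 = p.2 then q ^ d * (q - 1) else 0)
      = F.card * (q ^ d * (q - 1)) := by
    rw [sum_product]
    simp
  have hcast := congrArg (Nat.cast : ℕ → ℝ) (sum_collisions_eq F)
  push_cast at hcast
  rw [← mul_sum, hcast, mul_sum]
  refine (sum_le_sum hpt).trans (le_of_eq ?_)
  rw [sum_add_distrib, hdiag, sum_const, card_product, nsmul_eq_mul]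
  push_cast
  ring

/-- If `E₀` avoids the origin and has at most one point on each punctured line, then the excess
`q n(x) - |F|²` summed over `E₀` is at most `|F| q^d`: each `x ∈ E₀` shares its excess with its
`q - 1` dilates, and these are distinct for distinct points of `E₀`. -/
lemma sum_collisions_transversal_le (E₀ F : Finset (Fin d → K)) (h0 : ∀ x ∈ E₀, x ≠ 0)
    (hE : Set.InjOn (fun x : Fin d → K => lineThrough x) E₀) :
    ∑ x ∈ E₀, ((Fintype.card K : ℝ) * collisions F x)
      ≤ E₀.card * (F.card : ℝ) ^ 2 + F.card * (Fintype.card K : ℝ) ^ d := by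
  set q : ℝ := (Fintype.card K : ℝ) with hq
  have hq1 : 0 < q - 1 := by
    have : 1 < Fintype.card K := Fintype.one_lt_card
    have : (1 : ℝ) < q := by rw [hq]; exact_mod_cast this
    linarith
  -- the excess of `q n(x)` over its Cauchy–Schwarz lower bound
  let g : (Fin d → K) → ℝ := fun x => q * collisions F x - (F.card : ℝ) ^ 2
  have hg : ∀ x, 0 ≤ g x := fun x => sub_nonneg.2 (card_sq_le_collisions F x)
  have hinj : Set.InjOn (fun p : Kˣ × (Fin d → K) => (p.1 : K) • p.2)
      ((univ : Finset Kˣ) ×ˢ E₀ : Finset (Kˣ × (Fin d → K))) := by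
    rintro ⟨s, x⟩ hx ⟨s', x'⟩ hx' h
    simp only [coe_product, Set.mem_prod, mem_coe, mem_univ, true_and] at hx hx'
    simp only at h
    have hxx : x' = ((s'⁻¹ * s : Kˣ) : K) • x := by
      rw [Units.val_mul, mul_smul, h, smul_smul, Units.inv_mul, one_smul]
    have hl : lineThrough x = lineThrough x' := by
      ext y
      simp only [lineThrough, mem_filter, mem_univ, true_and]
      constructor
      · rintro ⟨t, ht, rfl⟩
        refine ⟨t * ((s⁻¹ * s' : Kˣ) : K), mul_ne_zero ht (Units.ne_zero _), ?_⟩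
        rw [hxx, smul_smul, mul_assoc, ← Units.val_mul]
        simp
      · rintro ⟨t, ht, rfl⟩
        exact ⟨t * ((s'⁻¹ * s : Kˣ) : K), mul_ne_zero ht (Units.ne_zero _), by
          rw [hxx, smul_smul]⟩
    have hx2 : x = x' := hE hx hx' hl
    subst hx2
    have : (s : K) = s' := smul_left_injective K (h0 x hx) h
    rw [Units.ext this]
  have hle : (q - 1) * ∑ x ∈ E₀, g x ≤ ∑ x : Fin d → K, g x := by
    calc (q - 1) * ∑ x ∈ E₀, g x = ∑ p ∈ (univ : Finset Kˣ) ×ˢ E₀, g ((p.1 : K) • p.2) := by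
          rw [sum_product]
          have hdil : ∀ (s : Kˣ) (x : Fin d → K), g ((s : K) • x) = g x := fun s x => by
            simp only [g, collisions_smul s.ne_zero]
          simp only [hdil]
          rw [sum_const, card_univ, Fintype.card_units, nsmul_eq_mul,
            Nat.cast_sub Fintype.card_pos, Nat.cast_one]
      _ = ∑ x ∈ ((univ : Finset Kˣ) ×ˢ E₀).image (fun p => (p.1 : K) • p.2), g x := by
          rw [sum_image hinj]
      _ ≤ ∑ x : Fin d → K, g x :=
          sum_le_sum_of_subset_of_nonneg (subset_univ _) fun x _ _ => hg x
  have htot : ∑ x : Fin d → K, g x ≤ (q - 1) * (F.card * q ^ d) := by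
    have h1 := sum_collisions_le F
    rw [← hq] at h1
    simp only [g, sum_sub_distrib, sum_const, card_univ, Fintype.card_fun, Fintype.card_fin,
      nsmul_eq_mul, Nat.cast_pow]
    rw [← hq]
    linarith
  have hfin := le_of_mul_le_mul_left (hle.trans htot) hq1
  simp only [g, sum_sub_distrib, sum_const, nsmul_eq_mul] at hfin
  linarith

lemma sq_le_card_dotSet_mul (E₀ F : Finset (Fin d → K)) :
    ((E₀.card : ℝ) * F.card) ^ 2
      ≤ (dotSet E₀ F).card * (E₀.card * ∑ x ∈ E₀, (collisions F x : ℝ)) := by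
  let a : (Fin d → K) → K → ℝ := fun x t => ((F.filter fun y => fqDot x y = t).card : ℝ)
  have hsum : ∑ t ∈ dotSet E₀ F, ∑ x ∈ E₀, a x t = E₀.card * F.card := by
    rw [sum_comm, ← nsmul_eq_mul, ← sum_const]
    refine sum_congr rfl fun x hx => ?_
    rw [← sum_card_fiber F x]
    refine sum_subset (subset_univ _) fun t _ ht => ?_
    rw [Nat.cast_eq_zero, card_eq_zero, filter_eq_empty_iff]
    rintro y hy rfl
    exact ht (mem_image.2 ⟨(x, y), mem_product.2 ⟨hx, hy⟩, rfl⟩)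
  rw [← hsum]
  refine sq_sum_le_card_mul_sum_sq.trans (mul_le_mul_of_nonneg_left ?_ (Nat.cast_nonneg _))
  calc ∑ t ∈ dotSet E₀ F, (∑ x ∈ E₀, a x t) ^ 2
      ≤ ∑ t : K, (∑ x ∈ E₀, a x t) ^ 2 :=
        sum_le_sum_of_subset_of_nonneg (subset_univ _) fun _ _ _ => sq_nonneg _
    _ ≤ ∑ t : K, E₀.card * ∑ x ∈ E₀, a x t ^ 2 :=
        sum_le_sum fun _ _ => sq_sum_le_card_mul_sum_sq
    _ = E₀.card * ∑ x ∈ E₀, (collisions F x : ℝ) := by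
        rw [← mul_sum, sum_comm]
        simp only [collisions_eq_sum_sq, a]

/-- A set with at most one point on each punctured line determines at least `q / 2` dot products
with `F` as soon as `|E₀||F| ≥ q^d`. -/
lemma card_le_two_mul_card_dotSet (E₀ F : Finset (Fin d → K)) (h0 : ∀ x ∈ E₀, x ≠ 0)
    (hE : Set.InjOn (fun x : Fin d → K => lineThrough x) E₀)
    (hEF : (Fintype.card K : ℝ) ^ d ≤ (E₀.card : ℝ) * F.card) :
    (Fintype.card K : ℝ) ≤ 2 * (dotSet E₀ F).card := by
  have h1 := sum_collisions_transversal_le E₀ F h0 hE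
  have h2 := sq_le_card_dotSet_mul E₀ F
  rw [← mul_sum] at h1
  set q : ℝ := (Fintype.card K : ℝ) with hq
  set S : ℝ := ∑ x ∈ E₀, (collisions F x : ℝ)
  set M : ℝ := ((dotSet E₀ F).card : ℝ)
  set e : ℝ := (E₀.card : ℝ)
  set f : ℝ := (F.card : ℝ)
  have hq0 : 0 < q := by rw [hq]; exact_mod_cast Fintype.card_pos
  have hP : 0 < e * f := (pow_pos hq0 d).trans_le hEF
  have hM : 0 ≤ M := Nat.cast_nonneg _
  have he : 0 ≤ e := Nat.cast_nonneg _
  have key : q * (e * f) ^ 2 ≤ 2 * M * (e * f) ^ 2 :=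
    calc q * (e * f) ^ 2 ≤ q * (M * (e * S)) := by gcongr
      _ = M * e * (q * S) := by ring
      _ ≤ M * e * (e * f ^ 2 + f * q ^ d) := by gcongr
      _ = M * ((e * f) ^ 2 + (e * f) * q ^ d) := by ring
      _ ≤ M * ((e * f) ^ 2 + (e * f) * (e * f)) := by gcongr
      _ = 2 * M * (e * f) ^ 2 := by ring
  exact le_of_mul_le_mul_right key (pow_pos hP 2)

end

/-- if E \ {0} meets at least c₀ q^{-α}|E| lines through the origin and
|E||F| ≥ C q^{d+α}, then some E₀ ⊆ E with |E₀| ≥ c q^{-α}|E| has |Π(E₀,F)| ≥ cq. -/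
theorem dotSet_card_of_many_lines (d : ℕ) (hd : 2 ≤ d) (c₀ : ℝ) (hc₀ : 0 < c₀) :
    ∃ C : ℝ, 1 < C ∧ ∃ c : ℝ, 0 < c ∧ c < 1 ∧
      ∀ α : ℝ, 0 ≤ α → α ≤ 1 →
      ∀ (K : Type) [Field K] [Fintype K] [DecidableEq K],
        Odd (Fintype.card K) →
        ∀ E F : Finset (Fin d → K),
          ((numLines E : ℝ) ≥ c₀ * (Fintype.card K : ℝ) ^ (-α) * (E.card : ℝ)) →
          ((E.card : ℝ) * (F.card : ℝ) ≥ C * (Fintype.card K : ℝ) ^ ((d : ℝ) + α)) →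
          ∃ E₀ ⊆ E, ((E₀.card : ℝ) ≥ c * (Fintype.card K : ℝ) ^ (-α) * (E.card : ℝ)) ∧
            ((dotSet E₀ F).card : ℝ) ≥ c * (Fintype.card K : ℝ) := by
  refine ⟨1 / c₀ + 2, by have := one_div_pos.2 hc₀; linarith, min c₀ (1 / 2),
    lt_min hc₀ (by norm_num), (min_le_right _ _).trans_lt (by norm_num), ?_⟩
  intro α _ _ K _ _ _ _ E F hN hEF
  set q : ℝ := (Fintype.card K : ℝ) with hq
  have hq0 : 0 < q := by rw [hq]; exact_mod_cast Fintype.card_pos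
  obtain ⟨E₀, hsub, hinj, himg⟩ := Finset.exists_subset_injOn_image_eq_of_surjOn
    (f := fun x : Fin d → K => lineThrough x) (E.filter fun x => x ≠ 0 : Finset (Fin d → K))
    ((E.filter fun x => x ≠ 0).image fun x => lineThrough x)
    (by rw [coe_image]; exact Set.surjOn_image _ _)
  have hcard : (E₀.card : ℝ) = numLines E := by
    rw [numLines, ← himg, card_image_of_injOn hinj]
  have hmem : ∀ x ∈ E₀, x ∈ E ∧ x ≠ 0 := fun x hx => mem_filter.1 (hsub hx)
  have hlow : c₀ * q ^ (-α) * E.card ≤ E₀.card := hcard ▸ hN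
  have hqd : q ^ d ≤ (E₀.card : ℝ) * F.card :=
    calc q ^ d ≤ c₀ * (1 / c₀ + 2) * q ^ d := by
          have : c₀ * (1 / c₀ + 2) = 1 + 2 * c₀ := by field_simp
          rw [this]
          nlinarith [pow_pos hq0 d]
      _ = c₀ * q ^ (-α) * ((1 / c₀ + 2) * q ^ ((d : ℝ) + α)) := by
          have : q ^ d = q ^ (-α) * q ^ ((d : ℝ) + α) := by
            rw [← Real.rpow_add hq0, ← Real.rpow_natCast]
            congr 1
            ring
          rw [this]
          ring
      _ ≤ c₀ * q ^ (-α) * ((E.card : ℝ) * F.card) := by gcongr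
      _ = c₀ * q ^ (-α) * E.card * F.card := by ring
      _ ≤ (E₀.card : ℝ) * F.card := by gcongr
  refine ⟨E₀, fun x hx => (hmem x hx).1, ge_iff_le.2 (le_trans ?_ hlow), ?_⟩
  · gcongr
    exact min_le_left _ _
  · have hmain := card_le_two_mul_card_dotSet E₀ F (fun x hx => (hmem x hx).2) hinj hqd
    have : min c₀ (1 / 2) * q ≤ 1 / 2 * q :=
      mul_le_mul_of_nonneg_right (min_le_right _ _) hq0.le
    linarith
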